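/- For every odd n ≥ 5, W^(1)[g_n] < W^(1)[Maj_n]. -/

import Mathlib

open Finset

namespace BKS

/-- sign function: 1 if z ≥ 0, -1 otherwise. -/
noncomputable def sgn (z : ℝ) : ℝ := if 0 ≤ z then 1 else -1

/-- encode Bool as the ±1 value of a bit. -/
def chi (b : Bool) : ℝ := if b then 1 else -1

/-- Fourier coefficient of f at S. -/
noncomputable def fourierCoeff {n : ℕ} (f : (Fin n → Bool) → ℝ) (S : Finset (Fin n)) : ℝ :=
  (1 / 2 ^ n : ℝ) * ∑ x : Fin n → Bool, f x * ∏ i ∈ S, chi (x i)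

/-- Fourier weight of f at level k: W^(k)[f]. -/
noncomputable def fourierWeight {n : ℕ} (k : ℕ) (f : (Fin n → Bool) → ℝ) : ℝ :=
  ∑ S ∈ Finset.univ.filter (fun S : Finset (Fin n) => S.card = k), (fourierCoeff f S) ^ 2

/-- Noise stability of f at ρ. -/
noncomputable def noiseStab {n : ℕ} (ρ : ℝ) (f : (Fin n → Bool) → ℝ) : ℝ :=
  ∑ k ∈ Finset.range (n + 1), ρ ^ k * fourierWeight k f

/-- Majority function on n bits. -/
noncomputable def Maj (n : ℕ) : (Fin n → Bool) → ℝ := fun x => sgn (∑ i, chi (x i))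

/-- The function g_n(x) = sgn(2(x_1 + ⋯ + x_{n-3}) + x_{n-2} + x_{n-1} + x_n). -/
noncomputable def gfun (n : ℕ) : (Fin n → Bool) → ℝ :=
  fun x => sgn (∑ i : Fin n, (if (i : ℕ) < n - 3 then (2 : ℝ) else 1) * chi (x i))

/-- f is a linear threshold function. -/
def IsLTF {n : ℕ} (f : (Fin n → Bool) → ℝ) : Prop :=
  ∃ (w0 : ℝ) (w : Fin n → ℝ), ∀ x, f x = sgn (w0 + ∑ i, w i * chi (x i))


lemma sgn_pos {z : ℝ} (h : 0 ≤ z) : sgn z = 1 := by simp [sgn, h]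

lemma sgn_neg {z : ℝ} (h : z < 0) : sgn z = -1 := by simp [sgn, not_le.mpr h]

lemma weight_one {n : ℕ} (f : (Fin n → Bool) → ℝ) :
    fourierWeight 1 f = ∑ i : Fin n, ((1 / 2 ^ n : ℝ) * ∑ x : Fin n → Bool, f x * chi (x i)) ^ 2 := by
  unfold fourierWeight
  have h : (Finset.univ.filter (fun S : Finset (Fin n) => S.card = 1))
      = Finset.powersetCard 1 Finset.univ := by
    ext S; simp [Finset.mem_powersetCard]
  rw [h, Finset.powersetCard_one, Finset.sum_map]
  simp [fourierCoeff]

/-- Sums of functions of the sum of the bits. -/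
lemma sum_fn (n : ℕ) (F : ℝ → ℝ) :
    ∑ y : Fin n → Bool, F (∑ j, chi (y j))
      = ∑ t ∈ Finset.range (n + 1), (n.choose t : ℝ) * F (2 * t - n) := by
  have h := Finset.sum_powerset_apply_card (x := (Finset.univ : Finset (Fin n)))
    (fun t : ℕ => F (2 * t - n))
  simp only [Finset.card_univ, Fintype.card_fin, nsmul_eq_mul, Finset.powerset_univ] at h
  rw [← h]
  refine Finset.sum_bij' (fun y _ => Finset.univ.filter (fun j => y j = true))
    (fun S _ => fun j => decide (j ∈ S)) ?_ ?_ ?_ ?_ ?_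
  · simp
  · simp
  · intro y _; ext j; simp
  · intro S _; ext j; simp
  · intro y _
    congr 1
    have : ∀ j, chi (y j) = 2 * (if y j = true then 1 else 0) - 1 := by
      intro j; cases y j <;> simp [chi] <;> norm_num
    simp only [this, Finset.sum_sub_distrib, ← Finset.mul_sum, Finset.sum_boole]
    simp

/-- Derivative in one coordinate. -/
lemma sum_diff (n : ℕ) (i : Fin (n + 1)) (F : ℝ → ℝ) :
    ∑ x : Fin (n + 1) → Bool, F (∑ j, chi (x j)) * chi (x i)
      = ∑ y : Fin n → Bool, (F (1 + ∑ j, chi (y j)) - F (-1 + ∑ j, chi (y j))) := by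
  rw [← (Fin.insertNthEquiv (fun _ => Bool) i).sum_comp, Fintype.sum_prod_type]
  simp only [Fin.insertNthEquiv_apply, Fin.sum_univ_succAbove _ i, Fin.insertNth_apply_same,
    Fin.insertNth_apply_succAbove, Fintype.sum_bool]
  simp [chi, Finset.sum_add_distrib, sub_eq_add_neg]

lemma sum_diff' (n : ℕ) (i : Fin (n + 1)) (F : ℝ → ℝ) :
    ∑ x : Fin (n + 1) → Bool, F (∑ j, chi (x j)) * chi (x i)
      = ∑ t ∈ Finset.range (n + 1), (n.choose t : ℝ) *
        (F (1 + (2 * t - n)) - F (-1 + (2 * t - n))) := by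
  rw [sum_diff, sum_fn n (fun s => F (1 + s) - F (-1 + s))]

lemma maj_coeff (N : ℕ) (i : Fin (2 * N + 1)) :
    ∑ x : Fin (2 * N + 1) → Bool, Maj (2 * N + 1) x * chi (x i) = 2 * (N.centralBinom : ℝ) := by
  unfold Maj
  rw [sum_diff', Finset.sum_eq_single N]
  · rw [sgn_pos (by push_cast; linarith), sgn_neg (by push_cast; linarith), Nat.centralBinom]
    ring
  · intro t _ ht
    rcases lt_or_gt_of_ne ht with h | h
    · have h' : (t : ℝ) + 1 ≤ N := by exact_mod_cast h
      rw [sgn_neg (by push_cast; linarith), sgn_neg (by push_cast; linarith)]; ring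
    · have h' : (N : ℝ) + 1 ≤ t := by exact_mod_cast h
      rw [sgn_pos (by push_cast; linarith), sgn_pos (by push_cast; linarith)]; ring
  · intro h; simp at h; omega

lemma gfun_append (m : ℕ) (y : Fin m → Bool) (z : Fin 3 → Bool) :
    gfun (m + 3) (Fin.append y z) = sgn (2 * (∑ j, chi (y j)) + ∑ j, chi (z j)) := by
  unfold gfun
  rw [Fin.sum_univ_add]
  simp [Finset.mul_sum]

lemma sum_append (m : ℕ) (G : (Fin (m + 3) → Bool) → ℝ) :
    ∑ x, G x = ∑ y : Fin m → Bool, ∑ z : Fin 3 → Bool, G (Fin.append y z) := by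
  rw [← (Fin.appendEquiv (α := Bool) m 3).sum_comp, Fintype.sum_prod_type]
  rfl

lemma g_coeff_left (j : ℕ) (i : Fin (2 * j + 1 + 1)) :
    ∑ x : Fin (2 * j + 1 + 1 + 3) → Bool, gfun (2 * j + 1 + 1 + 3) x * chi (x (Fin.castAdd 3 i))
      = 8 * ((j + 1).centralBinom : ℝ) := by
  rw [sum_append]
  simp only [gfun_append, Fin.append_left, ← Finset.sum_mul]
  rw [sum_diff' _ i (fun s => ∑ z : Fin 3 → Bool, sgn (2 * s + ∑ j, chi (z j)))]
  have hc : ∀ s : ℝ, ∑ z : Fin 3 → Bool, sgn (2 * s + ∑ j, chi (z j))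
      = sgn (2 * s - 3) + 3 * sgn (2 * s - 1) + 3 * sgn (2 * s + 1) + sgn (2 * s + 3) := by
    intro s
    rw [sum_fn 3 (fun u => sgn (2 * s + u))]
    simp only [Finset.sum_range_succ, Finset.sum_range_zero]
    norm_num [Nat.choose]
    ring_nf
  simp only [hc]
  have hb : ((j + 1).centralBinom : ℝ)
      = ((2 * j + 1).choose j : ℝ) + ((2 * j + 1).choose (j + 1) : ℝ) := by
    rw [Nat.centralBinom, show 2 * (j + 1) = (2 * j + 1) + 1 by ring, Nat.choose_succ_succ]
    push_cast; rfl
  have hsub : ({j, j + 1} : Finset ℕ) ⊆ Finset.range (2 * j + 1 + 1) := by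
    intro t ht; simp at ht ⊢; omega
  rw [← Finset.sum_subset hsub, Finset.sum_pair (by omega), hb]
  · push_cast
    have e1 : (1 : ℝ) + (2 * j - (2 * j + 1)) = 0 := by ring
    have e2 : (-1 : ℝ) + (2 * j - (2 * j + 1)) = -2 := by ring
    have e3 : (1 : ℝ) + (2 * (j + 1) - (2 * j + 1)) = 2 := by ring
    have e4 : (-1 : ℝ) + (2 * (j + 1) - (2 * j + 1)) = 0 := by ring
    rw [e1, e2, e3, e4]
    norm_num [sgn]
    ring
  · intro t _ ht
    simp at ht
    have : t < j ∨ j + 1 < t := by omega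
    rcases this with h | h
    · have h' : (t : ℝ) + 1 ≤ j := by exact_mod_cast h
      push_cast
      iterate 8 rw [sgn_neg (by linarith)]
      ring
    · have h' : (j : ℝ) + 1 + 1 ≤ t := by exact_mod_cast h
      push_cast
      iterate 8 rw [sgn_pos (by linarith)]
      ring

lemma g_coeff_right (k : ℕ) (i : Fin 3) :
    ∑ x : Fin (2 * k + 3) → Bool, gfun (2 * k + 3) x * chi (x (Fin.natAdd (2 * k) i))
      = 4 * (k.centralBinom : ℝ) := by
  rw [sum_append]
  simp only [gfun_append, Fin.append_right]
  have hc : ∀ s : ℝ, ∑ z : Fin 3 → Bool, sgn (2 * s + ∑ j, chi (z j)) * chi (z i)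
      = sgn (2 * s + 3) + sgn (2 * s + 1) - sgn (2 * s - 1) - sgn (2 * s - 3) := by
    intro s
    rw [sum_diff' 2 i (fun u => sgn (2 * s + u))]
    simp only [Finset.sum_range_succ, Finset.sum_range_zero]
    norm_num [Nat.choose]
    ring_nf
  simp only [hc]
  rw [sum_fn (2 * k) (fun s => sgn (2 * s + 3) + sgn (2 * s + 1) - sgn (2 * s - 1) - sgn (2 * s - 3)),
    Finset.sum_eq_single k]
  · push_cast
    rw [sub_self, Nat.centralBinom]
    norm_num [sgn]
    ring
  · intro t _ ht
    rcases lt_or_gt_of_ne ht with h | h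
    · have h' : (t : ℝ) + 1 ≤ k := by exact_mod_cast h
      push_cast
      iterate 4 rw [sgn_neg (by linarith)]
      ring
    · have h' : (k : ℝ) + 1 ≤ t := by exact_mod_cast h
      push_cast
      iterate 4 rw [sgn_pos (by linarith)]
      ring
  · intro h; simp at h; omega

theorem stmt6 (n : ℕ) (hn : Odd n) (h5 : 5 ≤ n) :
    fourierWeight 1 (gfun n) < fourierWeight 1 (Maj n) := by
  obtain ⟨j, rfl⟩ : ∃ j, n = 2 * j + 1 + 1 + 3 := by
    obtain ⟨r, hr⟩ := hn
    exact ⟨r - 2, by omega⟩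
  have hM : fourierWeight 1 (Maj (2 * j + 1 + 1 + 3)) = (2 * j + 5) *
      ((1 / 2 ^ (2 * j + 1 + 1 + 3) : ℝ) * (2 * ((j + 2).centralBinom : ℝ))) ^ 2 := by
    rw [weight_one]
    have := maj_coeff (j + 2)
    rw [show 2 * (j + 2) + 1 = 2 * j + 1 + 1 + 3 by ring] at this
    simp only [this]
    simp only [Finset.sum_const, Finset.card_univ, Fintype.card_fin, nsmul_eq_mul]
    push_cast; ring
  have hG : fourierWeight 1 (gfun (2 * j + 1 + 1 + 3)) =
      (2 * j + 2) * ((1 / 2 ^ (2 * j + 1 + 1 + 3) : ℝ) * (8 * ((j + 1).centralBinom : ℝ))) ^ 2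
      + 3 * ((1 / 2 ^ (2 * j + 1 + 1 + 3) : ℝ) * (4 * ((j + 1).centralBinom : ℝ))) ^ 2 := by
    rw [weight_one, Fin.sum_univ_add]
    have hr := g_coeff_right (j + 1)
    rw [show 2 * (j + 1) = 2 * j + 1 + 1 by ring] at hr
    simp only [g_coeff_left, hr]
    simp only [Finset.sum_const, Finset.card_univ, Fintype.card_fin, nsmul_eq_mul]
    push_cast; ring
  rw [hM, hG]
  have hrec : ((j : ℝ) + 2) * ((j + 2).centralBinom : ℝ)
      = 2 * (2 * j + 3) * ((j + 1).centralBinom : ℝ) := by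
    have := Nat.succ_mul_centralBinom_succ (j + 1)
    have h2 : (((j + 1 + 1) * (j + 1 + 1).centralBinom : ℕ) : ℝ)
      = ((2 * (2 * (j + 1) + 1) * (j + 1).centralBinom : ℕ) : ℝ) := by rw [this]
    push_cast at h2
    linarith
  have hc : (0 : ℝ) < ((j + 1).centralBinom : ℝ) := by exact_mod_cast Nat.centralBinom_pos _
  have hq : (0 : ℝ) < 1 / 2 ^ (2 * j + 1 + 1 + 3) := by positivity
  generalize ((j + 1).centralBinom : ℝ) = c at *
  generalize ((j + 2).centralBinom : ℝ) = d at *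
  generalize (1 / 2 ^ (2 * j + 1 + 1 + 3) : ℝ) = q at *
  have hj : (0 : ℝ) ≤ j := Nat.cast_nonneg j
  have hd : d = 2 * (2 * j + 3) * c / (j + 2) := by field_simp; linarith
  have key : (2 * (j : ℝ) + 5) * (2 * d) ^ 2 - ((2 * j + 2) * (8 * c) ^ 2 + 3 * (4 * c) ^ 2)
      = 16 * c ^ 2 * (j + 1) ^ 2 / (j + 2) ^ 2 := by
    rw [hd]; field_simp; ring
  have hpos : 0 < 16 * c ^ 2 * ((j : ℝ) + 1) ^ 2 / (j + 2) ^ 2 := by positivity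
  have := mul_pos (pow_pos hq 2) (key ▸ hpos)
  nlinarith [this]

end BKS
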